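/- With high probability, the set Len_{⌈2 log n⌉} of chords of D_n of length at least 2 log n (natural logarithm) is strongly connected as a subdiagram of the random oriented chord diagram D_n: for any two chords c, d of length at least 2 log n there is a directed path from c to d in the directed intersection graph of D_n using only chords of length at least 2 log n. -/

import Mathlib

open scoped Classical
open Finset Filter

/-- A chord diagram of size `n`: a fixed-point-free involution of the `2n`
endpoints `0, 1, …, 2n-1` (endpoint `i` here corresponds to the label `i+1`). -/
abbrev ChordDiagram (n : ℕ) :=
  {f : Fin (2*n) → Fin (2*n) // (∀ i, f (f i) = i) ∧ ∀ i, f i ≠ i}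

/-- `c` lies strictly between `a` and `b`. -/
def Between {m : ℕ} (a b c : Fin m) : Prop := min a b < c ∧ c < max a b

/-- The chord of `C` containing endpoint `x` crosses the chord containing endpoint `u`:
exactly one of the two endpoints `u`, `C u` lies strictly between `x` and `C x`. -/
def Crosses {n : ℕ} (C : ChordDiagram n) (x u : Fin (2*n)) : Prop :=
  Xor' (Between x (C.1 x) u) (Between x (C.1 x) (C.1 u))

/-- Uniform probability of an event over all chord diagrams of size `n`. -/
noncomputable def prob (n : ℕ) (E : ChordDiagram n → Prop) : ℝ :=
  ((Finset.univ.filter E).card : ℝ) / ((Finset.univ : Finset (ChordDiagram n)).card : ℝ)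

/-- The degree of the chord of `C` containing endpoint `x`: the number of chords
crossing it (each chord counted once via its smaller endpoint). -/
noncomputable def chordDegree {n : ℕ} (C : ChordDiagram n) (x : Fin (2*n)) : ℕ :=
  (Finset.univ.filter fun u => u < C.1 u ∧ Crosses C x u).card

/-- The length of the chord of `C` containing endpoint `x`: the number of endpoints
on the smaller of the two arcs it determines. -/
def chordLength {n : ℕ} (C : ChordDiagram n) (x : Fin (2*n)) : ℕ :=
  min (max (x:ℕ) (C.1 x : ℕ) - min (x:ℕ) (C.1 x : ℕ) - 1)
      (2*n - (max (x:ℕ) (C.1 x : ℕ) - min (x:ℕ) (C.1 x : ℕ)) - 1)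

/-- Degree of the chord containing endpoint `1` (index `0`). -/
noncomputable def degreeC1 (n : ℕ) (C : ChordDiagram n) : ℕ :=
  if h : 0 < n then chordDegree C ⟨0, by omega⟩ else 0

/-- Length of the chord containing endpoint `1` (index `0`). -/
noncomputable def lengthC1 (n : ℕ) (C : ChordDiagram n) : ℕ :=
  if h : 0 < n then chordLength C ⟨0, by omega⟩ else 0

/-- Membership in the component (w.r.t. the crossing relation) of the chord
containing the root endpoint. -/
def InRootComponent {n : ℕ} (C : ChordDiagram n) (root x : Fin (2*n)) : Prop :=
  x = root ∨ x = C.1 root ∨ Relation.ReflTransGen (fun a b => Crosses C a b) root x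

/-- The chord containing `x` is simple: it joins two (cyclically) consecutive endpoints. -/
def IsSimple {n : ℕ} (C : ChordDiagram n) (x : Fin (2*n)) : Prop :=
  (C.1 x : ℕ) = ((x : ℕ) + 1) % (2*n) ∨ (x : ℕ) = ((C.1 x : ℕ) + 1) % (2*n)

/-- `C` is monolithic (with respect to `root`): every chord not in the root
component is simple, and no two simple chords are next to each other. -/
def Monolithic {n : ℕ} (C : ChordDiagram n) (root : Fin (2*n)) : Prop :=
  (∀ x : Fin (2*n), ¬ InRootComponent C root x → IsSimple C x) ∧
  ¬ ∃ i : Fin (2*n), (C.1 i : ℕ) = ((i : ℕ) + 1) % (2*n) ∧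
      ∃ j : Fin (2*n), (j : ℕ) = ((i : ℕ) + 2) % (2*n) ∧ (C.1 j : ℕ) = ((i : ℕ) + 3) % (2*n)

/-- `L_j`: the number of chords of length `j` in `C`. -/
noncomputable def lengthCount (n : ℕ) (j : ℕ) (C : ChordDiagram n) : ℕ :=
  (Finset.univ.filter fun x : Fin (2*n) => x < C.1 x ∧ chordLength C x = j).card

/-- The endpoints of chords of `C` of length at least `k`. -/
noncomputable def lenAtLeast (n k : ℕ) (C : ChordDiagram n) : Finset (Fin (2*n)) :=
  Finset.univ.filter fun x => k ≤ chordLength C x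

/-- The number of chords with endpoints in `S` crossing the chord containing `x`. -/
noncomputable def degreeIn {n : ℕ} (C : ChordDiagram n) (S : Finset (Fin (2*n)))
    (x : Fin (2*n)) : ℕ :=
  (S.filter fun u => u < C.1 u ∧ Crosses C x u).card

/-- `S` (a chord-closed set of endpoints) is a set of chords each crossing at
least `k` other chords of `S`. -/
def IsCore {n : ℕ} (C : ChordDiagram n) (k : ℕ) (S : Finset (Fin (2*n))) : Prop :=
  (∀ x ∈ S, C.1 x ∈ S) ∧ ∀ x ∈ S, k ≤ degreeIn C S x

/-- The `k`-core: the union of all sets of chords in which every chord crosses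
at least `k` other chords of the set. -/
noncomputable def kCore (n k : ℕ) (C : ChordDiagram n) : Finset (Fin (2*n)) :=
  Finset.univ.filter fun x => ∃ S : Finset (Fin (2*n)), IsCore C k S ∧ x ∈ S

/-- The number of chords in the `k`-core of `C`. -/
noncomputable def kCoreSize (n k : ℕ) (C : ChordDiagram n) : ℕ :=
  ((kCore n k C).filter fun x => x < C.1 x).card

/-- `Z_k`: the number of chords of length strictly less than `k`. -/
noncomputable def shortCount (n k : ℕ) (C : ChordDiagram n) : ℕ :=
  (Finset.univ.filter fun x : Fin (2*n) => x < C.1 x ∧ chordLength C x < k).card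

/-- `C` contains a balanced clique of size `m`: a set of `m` pairwise crossing
chords with exactly one endpoint in each of the `2m` blocks of length `⌊n/m⌋`. -/
def HasBalancedClique (n m : ℕ) (C : ChordDiagram n) : Prop :=
  ∃ S : Finset (Fin (2*n)),
    (∀ x ∈ S, C.1 x ∈ S) ∧
    (∀ x ∈ S, ∀ u ∈ S, u ≠ x → u ≠ C.1 x → Crosses C x u) ∧
    (∀ t : ℕ, 1 ≤ t → t ≤ 2*m →
      (S.filter fun x => (t-1) * (n/m) ≤ (x:ℕ) ∧ (x:ℕ) < t * (n/m)).card = 1)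

/-- An oriented chord diagram: a chord diagram together with auxiliary fair-coin
bits; the bit attached to a crossing pair of chords (indexed by their smaller
endpoints) decides which chord over-crosses the other. -/
abbrev OrientedChordDiagram (n : ℕ) := ChordDiagram n × (Fin (2*n) → Fin (2*n) → Bool)

/-- The smaller endpoint of the chord of `C` containing `x`. -/
def chordRep {n : ℕ} (C : ChordDiagram n) (x : Fin (2*n)) : Fin (2*n) := min x (C.1 x)

/-- In the oriented diagram `D`, the chord containing `x` crosses and
over-crosses the chord containing `u`. -/
def OverD {n : ℕ} (D : OrientedChordDiagram n) (x u : Fin (2*n)) : Prop :=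
  Crosses D.1 x u ∧
    ((chordRep D.1 x ≤ chordRep D.1 u ∧ D.2 (chordRep D.1 x) (chordRep D.1 u) = true) ∨
     (chordRep D.1 u < chordRep D.1 x ∧ D.2 (chordRep D.1 u) (chordRep D.1 x) = false))

/-- Uniform probability of an event over all oriented chord diagrams of size `n`
(this yields a uniformly random diagram with each crossing oriented by an
independent fair coin). -/
noncomputable def probD (n : ℕ) (E : OrientedChordDiagram n → Prop) : ℝ :=
  ((Finset.univ.filter E).card : ℝ) /
    ((Finset.univ : Finset (OrientedChordDiagram n)).card : ℝ)

/-- The chords (given by their endpoints in `S`) are strongly connected in the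
directed intersection graph of `D`, using only chords of `S`. -/
def StronglyConnectedIn {n : ℕ} (D : OrientedChordDiagram n) (S : Set (Fin (2*n))) : Prop :=
  ∀ c ∈ S, ∀ d ∈ S,
    Relation.ReflTransGen (fun a b => a ∈ S ∧ b ∈ S ∧ OverD D a b) c d

/-- The number of chords with both endpoints in the cyclic block
`{i, i+1, …, i+t-1}` (mod `2n`). -/
noncomputable def chordsInBlock (n : ℕ) (C : ChordDiagram n) (i t : ℕ) : ℕ :=
  (Finset.univ.filter fun x : Fin (2*n) => x < C.1 x ∧
    (∃ a < t, (x:ℕ) = (i + a) % (2*n)) ∧ (∃ a < t, ((C.1 x : ℕ)) = (i + a) % (2*n))).card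

/-- The chord of `x` reaches the chord of `u` in the directed intersection graph
(of the whole diagram); endpoints of the same chord represent the same vertex. -/
def ReachChord {n : ℕ} (D : OrientedChordDiagram n) (x u : Fin (2*n)) : Prop :=
  u = x ∨ u = D.1.1 x ∨ Relation.ReflTransGen (fun a b => OverD D a b) x u

/-- The chords of `x` and `u` lie in the same strong component. -/
def MutualReach {n : ℕ} (D : OrientedChordDiagram n) (x u : Fin (2*n)) : Prop :=
  ReachChord D x u ∧ ReachChord D u x

/-- The number of single-chord strong components of `D`. -/
noncomputable def singleCount (n : ℕ) (D : OrientedChordDiagram n) : ℕ :=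
  (Finset.univ.filter fun x : Fin (2*n) =>
    x < D.1.1 x ∧ ∀ u : Fin (2*n), u ≠ x → u ≠ D.1.1 x → ¬ MutualReach D x u).card

/-!
Fix `m = ⌈2 log n⌉` and call a chord long if its length is at least `n / 20`. Two facts give strong
connectivity of the chords of length at least `m`: every shorter one of them over-crosses some long
chord and is over-crossed by some long chord, and from any long chord to any other there is a
directed path through one intermediate chord of length at least `m`.

In each case the intermediate chord is sought among those joining a point of a set `P` to a point of
a set `Q`, where the given chords separate `P` from `Q`, so that every such chord crosses them and
its coins are right with probability at least `2 ^ (-s)` for `s ≤ 2` given chords. Conditionally on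
the matching, the coins of distinct candidates are independent, so the failure probability is the
mean of `θ ^ N` with `N` the number of candidates and `θ = 1 - 2 ^ (-s)`. Revealing the partners of
the points of `P` one by one bounds this mean by `ρ ^ #P` as soon as
`(1 - ρ) * 2n + #P ≤ (1 - θ) * #Q`.

For a short chord, `P` consists of the `m` points following one of its endpoints and `Q` is almost
everything else, so `ρ = 3 / 5` works and the union bound over the endpoints succeeds because
`2 * log (5 / 3) > 1`. For two long chords, `P` and `Q` both have linear size and the failure
probability is exponentially small.
-/

section Matchings

open Equiv Nat

variable {α : Type*} [Fintype α] [DecidableEq α]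

/-- The perfect matchings of `S`, encoded as the involutions of the ambient type whose set of
moved points is exactly `S`. -/
noncomputable def matchings (S : Finset α) : Finset (Perm α) :=
  {σ | Function.Involutive σ ∧ σ.support = S}

lemma mem_matchings {S : Finset α} {σ : Perm α} :
    σ ∈ matchings S ↔ Function.Involutive σ ∧ σ.support = S := by
  simp only [matchings, mem_filter_univ]

lemma matchings_empty : matchings (∅ : Finset α) = {1} := by
  ext σ
  simp only [mem_matchings, Perm.support_eq_empty_iff, mem_singleton, and_iff_right_iff_imp]
  rintro rfl
  exact fun _ => rfl

lemma swap_mul_mem_matchings {S : Finset α} {a v : α} {τ : Perm α} (ha : a ∈ S) (hv : v ∈ S)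
    (hav : a ≠ v) (hτ : τ ∈ matchings (S \ {a, v})) : swap a v * τ ∈ matchings S := by
  obtain ⟨hinv, hsupp⟩ := mem_matchings.1 hτ
  have hdisj : (swap a v).Disjoint τ := by
    rw [Perm.disjoint_iff_disjoint_support, Perm.support_swap hav, hsupp]
    exact disjoint_sdiff
  refine mem_matchings.2 ⟨fun i => ?_, ?_⟩
  · calc (swap a v * τ * (swap a v * τ)) i
        = (swap a v * swap a v * (τ * τ)) i := by rw [hdisj.commute.symm.mul_mul_mul_comm]
      _ = i := by simp [hinv i]
  · rw [hdisj.support_mul, Perm.support_swap hav, hsupp]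
    exact union_sdiff_of_subset (insert_subset ha (singleton_subset_iff.2 hv))

lemma swap_mul_mem_matchings_sdiff {S : Finset α} {a v : α} {σ : Perm α} (hσ : σ ∈ matchings S)
    (hav : σ a = v) : swap a v * σ ∈ matchings (S \ {a, v}) := by
  obtain ⟨hinv, hsupp⟩ := mem_matchings.1 hσ
  have hva : σ v = a := by rw [← hav, hinv a]
  have happ (i : α) : (swap a v * σ) i = if i = a ∨ i = v then i else σ i := by
    have h1 : σ i = a ↔ i = v := by rw [← hva, σ.injective.eq_iff]
    have h2 : σ i = v ↔ i = a := by rw [← hav, σ.injective.eq_iff]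
    simp only [Perm.mul_apply, swap_apply_def, h1, h2]
    grind
  refine mem_matchings.2 ⟨fun i => ?_, ?_⟩
  · have := hinv i
    grind
  · ext i
    rw [Perm.mem_support, happ, ← hsupp, Finset.mem_sdiff, Perm.mem_support, mem_insert,
      mem_singleton]
    grind

lemma sum_matchings {M : Type*} [AddCommMonoid M] {S : Finset α} {a : α} (ha : a ∈ S)
    (g : Perm α → M) :
    ∑ σ ∈ matchings S, g σ
      = ∑ v ∈ S.erase a, ∑ τ ∈ matchings (S \ {a, v}), g (swap a v * τ) := by
  have hmaps : ∀ σ ∈ matchings S, σ a ∈ S.erase a := by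
    intro σ hσ
    obtain ⟨-, rfl⟩ := mem_matchings.1 hσ
    exact mem_erase.2 ⟨Perm.mem_support.1 ha, Perm.apply_mem_support.2 ha⟩
  rw [← sum_fiberwise_of_maps_to hmaps]
  refine sum_congr rfl fun v hv => ?_
  obtain ⟨hva, hvS⟩ := mem_erase.1 hv
  refine sum_equiv (Equiv.mulLeft (swap a v)) (fun σ => ?_) fun σ _ => by simp
  rw [mem_filter, coe_mulLeft]
  refine ⟨fun h => swap_mul_mem_matchings_sdiff h.1 h.2, fun h => ?_⟩
  have hmem := swap_mul_mem_matchings ha hvS hva.symm h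
  rw [swap_mul_self_mul] at hmem
  have hfix : (swap a v * σ) a = a := by
    rw [← Perm.notMem_support, (mem_matchings.1 h).2]
    simp
  exact ⟨hmem, by simpa using congrArg (swap a v) hfix⟩

omit [Fintype α] in
lemma card_sdiff_pair {S : Finset α} {a v : α} {k : ℕ} (hS : #S = 2 * (k + 1)) (ha : a ∈ S)
    (hv : v ∈ S.erase a) : #(S \ {a, v}) = 2 * k := by
  obtain ⟨hva, hvS⟩ := mem_erase.1 hv
  rw [card_sdiff_of_subset (insert_subset ha (singleton_subset_iff.2 hvS)), card_pair hva.symm]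
  omega

lemma card_matchings {k : ℕ} {S : Finset α} (hS : #S = 2 * k) :
    #(matchings S) = (2 * k - 1)‼ := by
  induction k generalizing S with
  | zero => simp [card_eq_zero.1 hS, matchings_empty]
  | succ k ih =>
    obtain ⟨a, ha⟩ : S.Nonempty := card_pos.1 (by omega)
    rw [card_eq_sum_ones, sum_matchings ha]
    have hv : ∀ v ∈ S.erase a, ∑ _τ ∈ matchings (S \ {a, v}), 1 = (2 * k - 1)‼ := fun v hv => by
      rw [← card_eq_sum_ones, ih (card_sdiff_pair hS ha hv)]
    rw [sum_congr rfl hv, sum_const, card_erase_of_mem ha, hS, smul_eq_mul]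
    exact (doubleFactorial_add_one (2 * k)).symm

/-- The number of points of `P` that `f` sends into `Q`; for a matching `f` and disjoint `P`, `Q`
this is the number of pairs joining `P` to `Q`. -/
def linkCount (f : α → α) (P Q : Finset α) : ℕ := #{i ∈ P | f i ∈ Q}

omit [Fintype α] in
lemma linkCount_swap_mul {a v : α} {τ : Perm α} {P Q : Finset α} (haP : a ∈ P) (haQ : a ∉ Q)
    (hτa : τ a = a) (hτv : τ v = v) :
    linkCount (swap a v * τ) P Q
      = (if v ∈ Q then 1 else 0) + linkCount τ (P \ {a, v}) (Q \ {a, v}) := by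
  have hout : {i ∈ P \ {a, v} | τ i ∈ Q \ {a, v}}
      = {i ∈ P | (swap a v * τ) i ∈ Q}.erase a := by
    ext i
    have h1 : τ i = a ↔ i = a := by rw [← τ.injective.eq_iff (a := i), hτa]
    have h2 : τ i = v ↔ i = v := by rw [← τ.injective.eq_iff (a := i), hτv]
    simp only [mem_filter, Finset.mem_sdiff, mem_insert, mem_singleton, mem_erase, Perm.mul_apply,
      swap_apply_def, h1, h2]
    grind
  have hmem : a ∈ ({i ∈ P | (swap a v * τ) i ∈ Q} : Finset α) ↔ v ∈ Q := by
    rw [mem_filter, Perm.mul_apply, hτa, swap_apply_left, and_iff_right haP]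
  rw [linkCount, linkCount, hout]
  split_ifs with h
  · rw [add_comm, card_erase_add_one (hmem.2 h)]
  · rw [erase_eq_of_notMem (mt hmem.1 h), zero_add]

omit [Fintype α] in
lemma sum_one_add_ite_sub_ite {S P Q : Finset α} {a : α} (haP : a ∈ P) (hPS : P ⊆ S)
    (hQS : Q ⊆ S) (haQ : a ∉ Q) (c : ℝ) :
    ∑ v ∈ S.erase a, (1 + (if v ∈ P then 1 else 0) - (if v ∈ Q then c else 0))
      = (#S - 1) + (#P - 1) - c * #Q := by
  have hP : (S.erase a).filter (· ∈ P) = P.erase a := by grind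
  have hQ : (S.erase a).filter (· ∈ Q) = Q := by grind
  simp only [sum_sub_distrib, sum_add_distrib, ← sum_filter, hP, hQ, sum_const, nsmul_eq_mul,
    cast_card_erase_of_mem haP, cast_card_erase_of_mem (hPS haP)]
  ring

omit [Fintype α] in
lemma pow_mul_pow_card_sdiff_pair_le {P Q : Finset α} {a v : α} {θ ρ : ℝ} (haP : a ∈ P)
    (hva : v ≠ a) (hPQ : Disjoint P Q) (hρ : 1 / 2 ≤ ρ) :
    θ ^ (if v ∈ Q then 1 else 0) * ρ ^ #(P \ {a, v})
      ≤ (1 + (if v ∈ P then 1 else 0) - (if v ∈ Q then 1 - θ else 0)) * ρ ^ (#P - 1) := by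
  by_cases hvP : v ∈ P
  · have hvQ : v ∉ Q := disjoint_left.1 hPQ hvP
    have hcard : #P - 1 = #(P \ {a, v}) + 1 := by
      rw [← card_erase_of_mem haP, ← card_erase_add_one (mem_erase.2 ⟨hva, hvP⟩)]
      congr 2
      grind
    rw [if_neg hvQ, if_pos hvP, if_neg hvQ, hcard, pow_succ]
    nlinarith [pow_pos (show 0 < ρ by linarith) #(P \ {a, v})]
  · have hcard : #(P \ {a, v}) = #P - 1 := by
      rw [← card_erase_of_mem haP]
      congr 1
      grind
    refine le_of_eq ?_
    rw [hcard, if_neg hvP]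
    split_ifs <;> ring

omit [Fintype α] in
lemma card_sdiff_pair_condition {S P Q : Finset α} {a : α} {θ ρ : ℝ} (haP : a ∈ P)
    (haQ : a ∉ Q) (hθ0 : 0 ≤ θ) (hθ1 : θ ≤ 1) (hρ1 : ρ ≤ 1)
    (h : (1 - ρ) * #S + #P ≤ (1 - θ) * #Q) (v : α) :
    (1 - ρ) * #(S \ {a, v}) + #(P \ {a, v}) ≤ (1 - θ) * #(Q \ {a, v}) := by
  have hSc : (#(S \ {a, v}) : ℝ) ≤ #S := mod_cast card_le_card sdiff_subset
  have hPc : (#(P \ {a, v}) : ℝ) + 1 ≤ #P := by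
    exact_mod_cast card_lt_card (ssubset_iff_of_subset sdiff_subset |>.2 ⟨a, haP, by simp⟩)
  have hQc : (#Q : ℝ) ≤ #(Q \ {a, v}) + 1 := by
    rw [show Q \ {a, v} = Q.erase v by grind]
    exact_mod_cast tsub_le_iff_right.1 pred_card_le_card_erase
  nlinarith

lemma sum_pow_linkCount_swap_mul {S P Q : Finset α} {a : α} (haP : a ∈ P) (haQ : a ∉ Q) (v : α)
    (θ : ℝ) :
    ∑ τ ∈ matchings (S \ {a, v}), θ ^ linkCount (swap a v * τ) P Q
      = θ ^ (if v ∈ Q then 1 else 0)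
        * ∑ τ ∈ matchings (S \ {a, v}), θ ^ linkCount τ (P \ {a, v}) (Q \ {a, v}) := by
  rw [mul_sum]
  refine sum_congr rfl fun τ hτ => ?_
  have hfix (i : α) (hi : i ∈ ({a, v} : Finset α)) : τ i = i := by
    rw [← Perm.notMem_support, (mem_matchings.1 hτ).2]
    exact fun h => (Finset.mem_sdiff.1 h).2 hi
  rw [linkCount_swap_mul haP haQ (hfix a (by simp)) (hfix v (by simp)), pow_add]

theorem sum_matchings_pow_linkCount_le {k : ℕ} {S P Q : Finset α} {θ ρ : ℝ} (hS : #S = 2 * k)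
    (hPS : P ⊆ S) (hQS : Q ⊆ S) (hPQ : Disjoint P Q) (hθ0 : 0 ≤ θ) (hθ1 : θ ≤ 1)
    (hρ0 : 1 / 2 ≤ ρ) (hρ1 : ρ ≤ 1) (h : (1 - ρ) * #S + #P ≤ (1 - θ) * #Q) :
    ∑ σ ∈ matchings S, θ ^ linkCount σ P Q ≤ ρ ^ #P * (2 * k - 1)‼ := by
  induction k generalizing S P Q with
  | zero =>
    obtain rfl : S = ∅ := card_eq_zero.1 hS
    obtain rfl : P = ∅ := subset_empty.1 hPS
    simp [matchings_empty, linkCount]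
  | succ k ih =>
    obtain rfl | ⟨a, haP⟩ := P.eq_empty_or_nonempty
    · simp [linkCount, card_matchings hS]
    have haQ : a ∉ Q := disjoint_left.1 hPQ haP
    have hstep : ∀ v ∈ S.erase a,
        ∑ τ ∈ matchings (S \ {a, v}), θ ^ linkCount (swap a v * τ) P Q
          ≤ (1 + (if v ∈ P then 1 else 0) - (if v ∈ Q then 1 - θ else 0)) * ρ ^ (#P - 1)
            * (2 * k - 1)‼ := by
      intro v hv
      calc ∑ τ ∈ matchings (S \ {a, v}), θ ^ linkCount (swap a v * τ) P Q
          = θ ^ (if v ∈ Q then 1 else 0)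
              * ∑ τ ∈ matchings (S \ {a, v}), θ ^ linkCount τ (P \ {a, v}) (Q \ {a, v}) :=
            sum_pow_linkCount_swap_mul haP haQ v θ
        _ ≤ θ ^ (if v ∈ Q then 1 else 0) * (ρ ^ #(P \ {a, v}) * (2 * k - 1)‼) := by
            gcongr
            exact ih (card_sdiff_pair hS (hPS haP) hv) (sdiff_subset_sdiff hPS le_rfl)
              (sdiff_subset_sdiff hQS le_rfl) (hPQ.mono sdiff_subset sdiff_subset)
              (card_sdiff_pair_condition haP haQ hθ0 hθ1 hρ1 h v)
        _ ≤ _ := by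
            rw [← mul_assoc]
            exact mul_le_mul_of_nonneg_right
              (pow_mul_pow_card_sdiff_pair_le haP (ne_of_mem_erase hv) hPQ hρ0) (cast_nonneg _)
    calc ∑ σ ∈ matchings S, θ ^ linkCount σ P Q
        = ∑ v ∈ S.erase a, ∑ τ ∈ matchings (S \ {a, v}), θ ^ linkCount (swap a v * τ) P Q :=
          sum_matchings (hPS haP) _
      _ ≤ ((#S - 1) + (#P - 1) - (1 - θ) * #Q) * ρ ^ (#P - 1) * (2 * k - 1)‼ := by
          rw [← sum_one_add_ite_sub_ite haP hPS hQS haQ, sum_mul, sum_mul]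
          exact sum_le_sum hstep
      _ ≤ (ρ * (#S - 1)) * ρ ^ (#P - 1) * (2 * k - 1)‼ := by
          gcongr
          linarith
      _ = ρ ^ #P * (2 * (k + 1) - 1)‼ := by
          rw [show 2 * (k + 1) - 1 = 2 * k + 1 by omega, doubleFactorial_add_one, hS,
            ← mul_pow_sub_one (card_pos.2 ⟨a, haP⟩).ne' ρ]
          push_cast
          ring

end Matchings

section Coins

variable {ι τ ζ : Type*} [DecidableEq ι]

lemma two_mul_card_filter_apply_eq {S : Finset (ι → Bool)} {i : ι}
    (hS : ∀ b, Function.update b i (!b i) ∈ S ↔ b ∈ S) (v : Bool) :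
    2 * #{b ∈ S | b i = v} = #S := by
  have hflip : #{b ∈ S | b i = v} = #{b ∈ S | ¬b i = v} := by
    refine card_nbij' (fun b => Function.update b i (!b i)) (fun b => Function.update b i (!b i))
      ?_ ?_ (by intro; simp) (by intro; simp) <;> intro b hb <;>
      simp only [coe_filter, Set.mem_ofPred_eq, hS, Function.update_self] at hb ⊢ <;> grind
  rw [← card_filter_add_card_filter_not (s := S) (fun b => b i = v), ← hflip, two_mul]

lemma two_pow_mul_card_filter_forall_apply_eq (Z : Finset ζ) {κ : ζ → ι} (hκ : Set.InjOn κ Z)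
    (w : ζ → Bool) {S : Finset (ι → Bool)}
    (hS : ∀ z ∈ Z, ∀ b, Function.update b (κ z) (!b (κ z)) ∈ S ↔ b ∈ S) :
    2 ^ #Z * #{b ∈ S | ∀ z ∈ Z, b (κ z) = w z} = #S := by
  induction Z using Finset.induction_on with
  | empty => simp
  | insert z Z hz ih =>
    rw [coe_insert, Set.injOn_insert (by simpa using hz)] at hκ
    have hflip : ∀ b, Function.update b (κ z) (!b (κ z)) ∈ ({b ∈ S | ∀ y ∈ Z, b (κ y) = w y} :
        Finset (ι → Bool)) ↔ b ∈ ({b ∈ S | ∀ y ∈ Z, b (κ y) = w y} : Finset (ι → Bool)) := by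
      intro b
      have hne : ∀ y ∈ Z, κ y ≠ κ z := fun y hy h => hκ.2 ⟨y, hy, h⟩
      rw [mem_filter, mem_filter, hS z (mem_insert_self z Z)]
      refine and_congr_right fun _ => forall₂_congr fun y hy => ?_
      rw [Function.update_of_ne (hne y hy)]
    calc 2 ^ #(insert z Z) * #{b ∈ S | ∀ y ∈ insert z Z, b (κ y) = w y}
        = 2 ^ #Z * (2 * #{b ∈ {b ∈ S | ∀ y ∈ Z, b (κ y) = w y} | b (κ z) = w z}) := by
          rw [card_insert_of_notMem hz, pow_succ, mul_assoc, filter_filter]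
          simp only [forall_mem_insert, and_comm]
      _ = 2 ^ #Z * #{b ∈ S | ∀ y ∈ Z, b (κ y) = w y} := by
          rw [two_mul_card_filter_apply_eq hflip]
      _ = #S := ih hκ.1 fun y hy => hS y (mem_insert_of_mem hy)

lemma card_filter_exists_apply_ne {Z : Finset ζ} {κ : ζ → ι} (hκ : Set.InjOn κ Z)
    (w : ζ → Bool) {S : Finset (ι → Bool)}
    (hS : ∀ z ∈ Z, ∀ b, Function.update b (κ z) (!b (κ z)) ∈ S ↔ b ∈ S) :
    (#{b ∈ S | ∃ z ∈ Z, b (κ z) ≠ w z} : ℝ) = (1 - (1 / 2) ^ #Z) * #S := by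
  have hagree : (2 ^ #Z * #{b ∈ S | ∀ z ∈ Z, b (κ z) = w z} : ℝ) = #S :=
    mod_cast two_pow_mul_card_filter_forall_apply_eq Z hκ w hS
  have hsplit : (#{b ∈ S | ∀ z ∈ Z, b (κ z) = w z} + #{b ∈ S | ∃ z ∈ Z, b (κ z) ≠ w z} : ℝ)
      = #S := by
    have := card_filter_add_card_filter_not (s := S) fun b => ∀ z ∈ Z, b (κ z) = w z
    push Not at this
    exact_mod_cast this
  rw [one_div, inv_pow, ← hagree, sub_mul, inv_mul_cancel_left₀ (by positivity), one_mul, hagree]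
  linarith

lemma card_filter_forall_exists_apply_ne [Fintype ι] (T : Finset τ) (Z : Finset ζ) (κ : τ → ζ → ι)
    (hκ : ∀ d ∈ T, ∀ e ∈ T, ∀ y ∈ Z, ∀ z ∈ Z, κ d y = κ e z → d = e ∧ y = z)
    (w : τ → ζ → Bool) :
    (#{b : ι → Bool | ∀ e ∈ T, ∃ z ∈ Z, b (κ e z) ≠ w e z} : ℝ)
      = (1 - (1 / 2) ^ #Z) ^ #T * Fintype.card (ι → Bool) := by
  induction T using Finset.induction_on with
  | empty => simp
  | insert e T he ih =>
    set S : Finset (ι → Bool) := {b | ∀ e ∈ T, ∃ z ∈ Z, b (κ e z) ≠ w e z} with hS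
    have hinj : Set.InjOn (κ e) Z := fun y hy z hz h =>
      (hκ e (mem_insert_self e T) e (mem_insert_self e T) y hy z hz h).2
    have hflip : ∀ z ∈ Z, ∀ b, Function.update b (κ e z) (!b (κ e z)) ∈ S ↔ b ∈ S := by
      intro z hz b
      rw [hS, mem_filter_univ, mem_filter_univ]
      refine forall₂_congr fun d hd => exists_congr fun y => and_congr_right fun hy => ?_
      rw [Function.update_of_ne]
      intro h
      exact he ((hκ d (mem_insert_of_mem hd) e (mem_insert_self e T) y hy z hz h).1 ▸ hd)
    have hsplit : ({b | ∀ d ∈ insert e T, ∃ z ∈ Z, b (κ d z) ≠ w d z} : Finset (ι → Bool))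
        = {b ∈ S | ∃ z ∈ Z, b (κ e z) ≠ w e z} := by
      rw [hS, filter_filter]
      simp only [forall_mem_insert, and_comm]
    rw [hsplit, card_filter_exists_apply_ne hinj (w e) hflip, card_insert_of_notMem he,
      pow_succ', mul_assoc,
      ih fun d hd c hc => hκ d (mem_insert_of_mem hd) c (mem_insert_of_mem hc)]

end Coins

section Geometry

variable {N : ℕ}

/-- The number of clockwise steps from `x` to `y` on the circle `Fin N`. -/
def cwDist (x y : Fin N) : ℕ := (y - x : Fin N)

/-- The graph distance of `x` and `y` on the circle `Fin N`. -/
def circDist (x y : Fin N) : ℕ := min (cwDist x y) (cwDist y x)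

/-- The `m` points that follow `x` clockwise. -/
def arcAfter (x : Fin N) (m : ℕ) : Finset (Fin N) := {i | cwDist x i ∈ Icc 1 m}

/-- The points at circular distance more than `k` from `x`. -/
def farFrom (x : Fin N) (k : ℕ) : Finset (Fin N) := {i | k < circDist x i}

/-- The chord joining `x` and `y` separates `i` from `j`. As `Between` is strict, `x` and `y` are on
the side of the points that are not between them. -/
def Separates (x y i j : Fin N) : Prop := Xor (Between x y i) (Between x y j)

lemma cwDist_cases (x y : Fin N) :
    (x ≤ y ∧ cwDist x y + x = y) ∨ (y < x ∧ cwDist x y + x = y + N) := by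
  rcases le_or_gt x y with h | h
  · refine Or.inl ⟨h, ?_⟩
    rw [cwDist, Fin.sub_val_of_le h]
    omega
  · refine Or.inr ⟨h, ?_⟩
    rw [cwDist, Fin.coe_sub_iff_lt.2 h]
    omega

lemma separates_of_cwDist_lt {x y i j : Fin N} (hi : 0 < cwDist x i)
    (hiy : cwDist x i < cwDist x y) (hyj : cwDist x y < cwDist x j) : Separates x y i j := by
  have hx := cwDist_cases x i
  have hy := cwDist_cases x y
  have hj := cwDist_cases x j
  simp only [Separates, Between, Xor, inf_lt_iff, lt_sup_iff, Fin.lt_def, Fin.le_def] at *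
  omega

lemma lt_circDist_of_separates {x y i j : Fin N} {m : ℕ} (h : Separates x y i j)
    (hx : m < circDist x i) (hy : m < circDist y i) : m < circDist i j := by
  have h1 := cwDist_cases x i
  have h2 := cwDist_cases i x
  have h3 := cwDist_cases y i
  have h4 := cwDist_cases i y
  have h5 := cwDist_cases i j
  have h6 := cwDist_cases j i
  simp only [Separates, Between, Xor, circDist, lt_inf_iff, inf_lt_iff, lt_sup_iff, Fin.lt_def,
    Fin.le_def] at *
  omega

lemma card_filter_cwDist_mem (x : Fin N) {A : Finset ℕ} (hA : A ⊆ range N) :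
    #{i | cwDist x i ∈ A} = #A := by
  have : NeZero N := ⟨x.pos.ne'⟩
  calc #{i | cwDist x i ∈ A} = #{j : Fin N | (j : ℕ) ∈ A} :=
        card_equiv (Equiv.subRight x) fun i => by simp only [mem_filter_univ]; rfl
    _ = #A := by
        refine card_nbij (fun j => (j : ℕ)) ?_ Fin.val_injective.injOn fun a ha => ?_
        · intro j
          simp
        · exact ⟨⟨a, mem_range.1 (hA ha)⟩, by simpa using ha⟩

lemma card_filter_circDist_le (x : Fin N) (m : ℕ) : #{i | circDist x i ≤ m} ≤ 2 * m + 1 := by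
  by_cases hm : N ≤ 2 * m + 1
  · exact (card_le_univ _).trans (by simpa using hm)
  calc #{i | circDist x i ≤ m} ≤ #{i | cwDist x i ∈ range (m + 1) ∪ Ico (N - m) N} := by
        refine card_le_card fun i hi => ?_
        have h1 := cwDist_cases x i
        have h2 := cwDist_cases i x
        have hlt : cwDist x i < N := (i - x).isLt
        rw [mem_filter_univ, circDist] at hi
        simp only [mem_filter_univ, mem_union, mem_range, mem_Ico]
        omega
    _ = #(range (m + 1) ∪ Ico (N - m) N) :=
        card_filter_cwDist_mem x fun a ha => by
          simp only [mem_union, mem_range, mem_Ico] at *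
          omega
    _ ≤ 2 * m + 1 := by
        refine (card_union_le _ _).trans ?_
        rw [card_range, Nat.card_Ico]
        omega

lemma le_card_farFrom (x : Fin N) (k : ℕ) : N - (2 * k + 1) ≤ #(farFrom x k) := by
  have := card_filter_circDist_le x k
  have := card_filter_add_card_filter_not (s := univ) fun i => circDist x i ≤ k
  simp only [not_le, card_univ, Fintype.card_fin] at this
  rw [farFrom]
  omega

lemma card_arcAfter (x : Fin N) {m : ℕ} (hm : m < N) : #(arcAfter x m) = m := by
  have hsub : Icc 1 m ⊆ range N := fun a ha => mem_range.2 ((mem_Icc.1 ha).2.trans_lt hm)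
  rw [arcAfter, card_filter_cwDist_mem x hsub, Nat.card_Icc, Nat.add_sub_cancel]

lemma mem_arcAfter {x i : Fin N} {m : ℕ} : i ∈ arcAfter x m ↔ 1 ≤ cwDist x i ∧ cwDist x i ≤ m := by
  rw [arcAfter, mem_filter_univ, mem_Icc]

lemma mem_farFrom {x i : Fin N} {k : ℕ} : i ∈ farFrom x k ↔ k < circDist x i := by
  rw [farFrom, mem_filter_univ]

lemma disjoint_arcAfter_farFrom {x : Fin N} {m k : ℕ} (h : m ≤ k) :
    Disjoint (arcAfter x m) (farFrom x k) := by
  refine disjoint_left.2 fun i hi hik => ?_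
  have hle := (mem_arcAfter.1 hi).2
  have hlt := (lt_min_iff.1 (mem_farFrom.1 hik)).1
  omega

lemma separates_of_mem_arcAfter {x y i j : Fin N} {m k : ℕ} (hi : i ∈ arcAfter x m)
    (hj : j ∈ farFrom x k) (hm : m < cwDist x y) (hk : cwDist x y ≤ k) : Separates x y i j := by
  obtain ⟨hi1, him⟩ := mem_arcAfter.1 hi
  have hkj : k < cwDist x j := (lt_min_iff.1 (mem_farFrom.1 hj)).1
  exact separates_of_cwDist_lt hi1 (him.trans_lt hm) (hk.trans_lt hkj)

lemma lt_circDist_of_mem_arcAfter {x i j : Fin N} {m k : ℕ} (hi : i ∈ arcAfter x m)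
    (hj : j ∈ farFrom x (k + m)) : k < circDist i j := by
  have hi' := mem_arcAfter.1 hi
  have hj' := lt_min_iff.1 (mem_farFrom.1 hj)
  have h1 := cwDist_cases x i
  have h2 := cwDist_cases x j
  have h3 := cwDist_cases j x
  have h4 := cwDist_cases i j
  have h5 := cwDist_cases j i
  rw [circDist, lt_min_iff]
  omega

lemma le_card_Ioo_of_lt_circDist {x y : Fin N} {L : ℕ} (h : L < circDist x y) :
    L ≤ #(Ioo (min x y) (max x y)) ∧ L ≤ #(Ioo (min x y) (max x y))ᶜ := by
  have h1 := cwDist_cases x y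
  have h2 := cwDist_cases y x
  rw [circDist] at h
  rw [card_compl, Fin.card_Ioo, Fintype.card_fin, Fin.coe_max, Fin.coe_min]
  omega

lemma exists_separated_quadrants {x y u v : Fin N} {L q : ℕ} (hxy : L < circDist x y)
    (huv : L < circDist u v) (hqL : 2 * q ≤ L + 1) :
    ∃ A B : Finset (Fin N), q ≤ #A ∧ q ≤ #B ∧
      ∀ i ∈ A, ∀ j ∈ B, Separates x y i j ∧ Separates u v i j := by
  obtain ⟨hI, hI'⟩ := le_card_Ioo_of_lt_circDist hxy
  obtain ⟨hJ, hJ'⟩ := le_card_Ioo_of_lt_circDist huv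
  have hsep {z w i j : Fin N} : Separates z w i j ↔
      Xor (i ∈ Ioo (min z w) (max z w)) (j ∈ Ioo (min z w) (max z w)) := by
    simp only [Separates, Between, mem_Ioo]
  simp only [hsep]
  generalize Ioo (min x y) (max x y) = I at *
  generalize Ioo (min u v) (max u v) = J at *
  have h1 := card_inter_add_card_sdiff I J
  have h2 := card_inter_add_card_sdiff Iᶜ J
  have h3 := card_inter_add_card_sdiff J I
  have h4 := card_inter_add_card_sdiff Jᶜ I
  rw [inter_comm J I] at h3
  rw [sdiff_eq_inter_compl J I, inter_comm J Iᶜ] at h3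
  rw [sdiff_eq_inter_compl Jᶜ I, inter_comm Jᶜ Iᶜ, ← sdiff_eq_inter_compl, inter_comm Jᶜ I,
    ← sdiff_eq_inter_compl] at h4
  have hcases : (q ≤ #(I ∩ J) ∧ q ≤ #(Iᶜ \ J)) ∨ (q ≤ #(I \ J) ∧ q ≤ #(Iᶜ ∩ J)) := by omega
  rcases hcases with h | h
  · exact ⟨I ∩ J, Iᶜ \ J, h.1, h.2, by grind [Xor, mem_compl]⟩
  · exact ⟨I \ J, Iᶜ ∩ J, h.1, h.2, by grind [Xor, mem_compl]⟩

lemma exists_far_separated {x y u v : Fin N} {L m p q : ℕ} (hxy : L < circDist x y)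
    (huv : L < circDist u v) (hpq : p + (4 * m + 2) ≤ q) (hqL : 2 * q ≤ L + 1) :
    ∃ P Q : Finset (Fin N), Disjoint P Q ∧ #P = p ∧ q ≤ #Q ∧
      ∀ i ∈ P, ∀ j ∈ Q, m < circDist i j ∧ Separates x y i j ∧ Separates u v i j := by
  obtain ⟨A, B, hA, hB, hAB⟩ := exists_separated_quadrants hxy huv hqL
  have hfar : p ≤ #{i ∈ A | m < circDist x i ∧ m < circDist y i} := by
    have hnear : #{i ∈ A | ¬(m < circDist x i ∧ m < circDist y i)} ≤ 4 * m + 2 :=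
      calc #{i ∈ A | ¬(m < circDist x i ∧ m < circDist y i)}
          ≤ #{i | circDist x i ≤ m ∨ circDist y i ≤ m} := card_le_card fun i hi => by
            have := (mem_filter.1 hi).2
            rw [mem_filter_univ]
            omega
        _ ≤ #{i | circDist x i ≤ m} + #{i | circDist y i ≤ m} := by
            rw [filter_or]
            exact card_union_le _ _
        _ ≤ (2 * m + 1) + (2 * m + 1) :=
            add_le_add (card_filter_circDist_le x m) (card_filter_circDist_le y m)
        _ = 4 * m + 2 := by ring
    have := card_filter_add_card_filter_not (s := A) fun i => m < circDist x i ∧ m < circDist y i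
    omega
  obtain ⟨P, hPA, hP⟩ := exists_subset_card_eq hfar
  refine ⟨P, B, ?_, hP, hB, fun i hi j hj => ?_⟩
  · refine disjoint_left.2 fun i hiP hiB => ?_
    have := (hAB i (mem_filter.1 (hPA hiP)).1 i hiB).1
    rcases this with h | h <;> exact h.2 h.1
  · obtain ⟨hiA, hix, hiy⟩ := mem_filter.1 (hPA hi)
    obtain ⟨hsep, hsep'⟩ := hAB i hiA j hj
    exact ⟨lt_circDist_of_separates hsep hix hiy, hsep, hsep'⟩

end Geometry

section Orientation

variable {n : ℕ} {C : ChordDiagram n} {D : OrientedChordDiagram n} {x u : Fin (2 * n)}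

lemma mem_lenAtLeast {k : ℕ} : x ∈ lenAtLeast n k C ↔ k < circDist x (C.1 x) := by
  have hne : (C.1 x : ℕ) ≠ x := Fin.val_ne_of_ne (C.2.2 x)
  have h1 := cwDist_cases x (C.1 x)
  have h2 := cwDist_cases (C.1 x) x
  rw [lenAtLeast, mem_filter_univ, chordLength, circDist]
  omega

lemma chordRep_apply (C : ChordDiagram n) (x : Fin (2 * n)) :
    chordRep C (C.1 x) = chordRep C x := by
  rw [chordRep, C.2.1, min_comm, chordRep]

lemma chordRep_eq_iff : chordRep C x = chordRep C u ↔ x = u ∨ x = C.1 u := by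
  refine ⟨fun h => ?_, ?_⟩
  · have := C.2.1 x
    have := C.2.1 u
    unfold chordRep at h
    grind
  · rintro (rfl | rfl)
    exacts [rfl, chordRep_apply C u]

lemma crosses_iff_separates : Crosses C x u ↔ Separates x (C.1 x) u (C.1 u) := Iff.rfl

lemma not_crosses_self (x : Fin (2 * n)) : ¬Crosses C x x := by
  simp [crosses_iff_separates, Separates, Between, and_comm]

lemma crosses_apply_left : Crosses C (C.1 x) u ↔ Crosses C x u := by
  simp only [Crosses, Between, C.2.1, min_comm, max_comm]

lemma crosses_apply_right : Crosses C x (C.1 u) ↔ Crosses C x u := by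
  rw [crosses_iff_separates, C.2.1, Separates, xor_comm]
  rfl

lemma Crosses.chordRep_ne (h : Crosses C x u) : chordRep C x ≠ chordRep C u := by
  rw [Ne, chordRep_eq_iff]
  rintro (rfl | rfl)
  · exact not_crosses_self x h
  · exact not_crosses_self u (crosses_apply_left.1 h)

lemma Crosses.symm (h : Crosses C x u) : Crosses C u x := by
  have hne := h.chordRep_ne
  rw [Ne, chordRep_eq_iff, not_or] at hne
  have h1 : (C.1 x : ℕ) ≠ C.1 u := fun e => hne.1 (by rw [← C.2.1 x, Fin.ext e, C.2.1])
  have h2 : (C.1 x : ℕ) ≠ u := fun e => hne.2 (by rw [← Fin.ext e, C.2.1])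
  have h3 := Fin.val_ne_of_ne hne.1
  have h4 := Fin.val_ne_of_ne hne.2
  simp only [crosses_iff_separates, Separates, Between, Xor, inf_lt_iff, lt_sup_iff,
    Fin.lt_def] at *
  omega

/-- The index of the coin that orients the crossing of the chords containing `x` and `u`. -/
def coinIndex (C : ChordDiagram n) (x u : Fin (2 * n)) : Fin (2 * n) × Fin (2 * n) :=
  (min (chordRep C x) (chordRep C u), max (chordRep C x) (chordRep C u))

lemma coinIndex_comm : coinIndex C x u = coinIndex C u x := by
  rw [coinIndex, min_comm, max_comm, coinIndex]

lemma overD_iff : OverD D x u ↔ Crosses D.1 x u ∧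
    Function.uncurry D.2 (coinIndex D.1 x u) = decide (chordRep D.1 x ≤ chordRep D.1 u) := by
  refine and_congr_right fun _ => ?_
  rcases le_or_gt (chordRep D.1 x) (chordRep D.1 u) with h | h
  · simp [coinIndex, h, h.not_gt]
  · simp [coinIndex, h, h.not_ge, h.le]

lemma overD_apply_left : OverD D (D.1.1 x) u ↔ OverD D x u := by
  rw [OverD, crosses_apply_left, chordRep_apply, OverD]

lemma overD_apply_right : OverD D x (D.1.1 u) ↔ OverD D x u := by
  rw [OverD, crosses_apply_right, chordRep_apply, OverD]

/-- The chord containing `i` relays from the chords containing the points of `X` to those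
containing the points of `U`: all of the former over-cross it and it over-crosses all of the
latter. -/
def IsRelay (D : OrientedChordDiagram n) (X U : Finset (Fin (2 * n))) (i : Fin (2 * n)) : Prop :=
  (∀ x ∈ X, OverD D x i) ∧ ∀ u ∈ U, OverD D i u

lemma not_isRelay_iff {X U : Finset (Fin (2 * n))} {i : Fin (2 * n)} (hXU : Disjoint X U)
    (hcross : ∀ z ∈ X ∪ U, Crosses D.1 z i) :
    ¬IsRelay D X U i ↔ ∃ z ∈ X ∪ U, Function.uncurry D.2 (coinIndex D.1 z i) ≠
      if z ∈ X then decide (chordRep D.1 z ≤ chordRep D.1 i)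
      else decide (chordRep D.1 i ≤ chordRep D.1 z) := by
  have hX : ∀ x ∈ X, OverD D x i ↔ Function.uncurry D.2 (coinIndex D.1 x i) =
      if x ∈ X then decide (chordRep D.1 x ≤ chordRep D.1 i)
      else decide (chordRep D.1 i ≤ chordRep D.1 x) := fun x hx => by
    rw [overD_iff, and_iff_right (hcross x (mem_union_left U hx)), if_pos hx]
  have hU : ∀ u ∈ U, OverD D i u ↔ Function.uncurry D.2 (coinIndex D.1 u i) =
      if u ∈ X then decide (chordRep D.1 u ≤ chordRep D.1 i)
      else decide (chordRep D.1 i ≤ chordRep D.1 u) := fun u hu => by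
    rw [overD_iff, and_iff_right (hcross u (mem_union_right X hu)).symm, coinIndex_comm,
      if_neg (disjoint_right.1 hXU hu)]
  rw [IsRelay, forall₂_congr hX, forall₂_congr hU, ← forall_mem_union]
  push Not
  rfl

lemma coinIndex_injective_of_separates {P Q Z : Finset (Fin (2 * n))} (hPQ : Disjoint P Q)
    (hinj : Set.InjOn (chordRep C) Z)
    (hsep : ∀ z ∈ Z, ∀ i ∈ P, ∀ j ∈ Q, Separates z (C.1 z) i j) :
    ∀ d ∈ ({i ∈ P | C.1 i ∈ Q} : Finset _), ∀ e ∈ ({i ∈ P | C.1 i ∈ Q} : Finset _),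
      ∀ y ∈ Z, ∀ z ∈ Z, coinIndex C y d = coinIndex C z e → d = e ∧ y = z := by
  intro d hd e he y hy z hz h
  obtain ⟨hdP, hdQ⟩ := mem_filter.1 hd
  obtain ⟨heP, heQ⟩ := mem_filter.1 he
  have hne : chordRep C z ≠ chordRep C d := Crosses.chordRep_ne (hsep z hz d hdP _ hdQ)
  have hreps : chordRep C y = chordRep C z ∧ chordRep C d = chordRep C e := by
    rw [coinIndex, coinIndex, Prod.mk.injEq] at h
    grind
  refine ⟨(chordRep_eq_iff.1 hreps.2).resolve_right ?_, hinj hy hz hreps.1⟩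
  rintro rfl
  exact disjoint_left.1 hPQ hdP heQ

lemma card_filter_forall_not_isRelay {P Q X U : Finset (Fin (2 * n))} (hPQ : Disjoint P Q)
    (hXU : Disjoint X U) (hinj : Set.InjOn (chordRep C) (X ∪ U : Finset _))
    (hsep : ∀ z ∈ X ∪ U, ∀ i ∈ P, ∀ j ∈ Q, Separates z (C.1 z) i j) :
    (#{b | ∀ i ∈ P, C.1 i ∈ Q → ¬IsRelay (C, b) X U i} : ℝ)
      = (1 - (1 / 2) ^ #(X ∪ U)) ^ linkCount C.1 P Q
        * Fintype.card (Fin (2 * n) → Fin (2 * n) → Bool) := by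
  trans (1 - (1 / 2) ^ #(X ∪ U)) ^ #{i ∈ P | C.1 i ∈ Q}
    * Fintype.card (Fin (2 * n) × Fin (2 * n) → Bool)
  · rw [← card_filter_forall_exists_apply_ne _ _ (fun i z => coinIndex C z i)
      (coinIndex_injective_of_separates hPQ hinj hsep)
      fun i z => if z ∈ X then decide (chordRep C z ≤ chordRep C i)
        else decide (chordRep C i ≤ chordRep C z), Nat.cast_inj]
    refine card_equiv (Equiv.curry _ _ _).symm fun b => ?_
    simp only [mem_filter, mem_univ, true_and, and_imp]
    exact forall₃_congr fun i hi hiQ => not_isRelay_iff hXU fun z hz => hsep z hz i hi _ hiQ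
  · rw [Fintype.card_congr (Equiv.curry (Fin (2 * n)) (Fin (2 * n)) Bool), linkCount]

end Orientation

section Probability

open scoped Nat

variable {n : ℕ}

lemma sum_chordDiagram {M : Type*} [AddCommMonoid M] (g : (Fin (2 * n) → Fin (2 * n)) → M) :
    ∑ C : ChordDiagram n, g C.1 = ∑ σ ∈ matchings (univ : Finset (Fin (2 * n))), g σ := by
  refine sum_bij' (fun C _ => Function.Involutive.toPerm C.1 C.2.1)
    (fun σ hσ => ⟨σ, (mem_matchings.1 hσ).1, fun i => ?_⟩) (fun C _ => ?_) (fun _ _ => mem_univ _)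
    (fun _ _ => rfl) (fun σ _ => Equiv.ext fun _ => rfl) fun _ _ => rfl
  · rw [← Equiv.Perm.mem_support, (mem_matchings.1 hσ).2]
    exact mem_univ i
  · refine mem_matchings.2 ⟨C.2.1, eq_univ_of_forall fun i => ?_⟩
    exact Equiv.Perm.mem_support.2 (C.2.2 i)

lemma card_chordDiagram (n : ℕ) : Fintype.card (ChordDiagram n) = (2 * n - 1)‼ := by
  rw [← card_univ, card_eq_sum_ones, sum_chordDiagram fun _ => 1, ← card_eq_sum_ones,
    card_matchings (k := n) (by simp)]

lemma probD_mono {E F : OrientedChordDiagram n → Prop} (h : ∀ D, E D → F D) :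
    probD n E ≤ probD n F := by
  unfold probD
  gcongr with D
  exact h D

lemma probD_le_one (E : OrientedChordDiagram n → Prop) : probD n E ≤ 1 :=
  div_le_one_of_le₀ (mod_cast card_filter_le _ _) (Nat.cast_nonneg _)

lemma probD_eq_zero {E : OrientedChordDiagram n → Prop} (h : ∀ D, ¬E D) : probD n E = 0 := by
  rw [probD, filter_false_of_mem fun D _ => h D, card_empty, Nat.cast_zero, zero_div]

lemma probD_or_le (E F : OrientedChordDiagram n → Prop) :
    probD n (fun D => E D ∨ F D) ≤ probD n E + probD n F := by
  unfold probD
  rw [← add_div]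
  gcongr
  exact_mod_cast (card_le_card fun D hD => by simpa using hD).trans
    (card_union_le ({D | E D} : Finset _) ({D | F D} : Finset _))

lemma probD_exists_le {ι : Type*} [Fintype ι] (E : ι → OrientedChordDiagram n → Prop) :
    probD n (fun D => ∃ i, E i D) ≤ ∑ i, probD n (E i) := by
  unfold probD
  rw [← sum_div]
  gcongr
  exact_mod_cast (card_le_card fun D hD => by simpa using hD).trans
    (card_biUnion_le (s := univ) (t := fun i => ({D | E i D} : Finset _)))

lemma probD_exists_le_card_mul {ι : Type*} [Fintype ι] {E : ι → OrientedChordDiagram n → Prop}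
    {c : ℝ} (h : ∀ i, probD n (E i) ≤ c) :
    probD n (fun D => ∃ i, E i D) ≤ Fintype.card ι * c := by
  refine (probD_exists_le E).trans ((sum_le_card_nsmul _ _ c fun i _ => h i).trans_eq ?_)
  rw [nsmul_eq_mul, card_univ]

lemma one_sub_probD_not (E : OrientedChordDiagram n → Prop) :
    1 - probD n (fun D => ¬E D) = probD n E := by
  have hpos : (0 : ℝ) < #(univ : Finset (OrientedChordDiagram n)) := by
    rw [card_univ, Fintype.card_prod, card_chordDiagram]
    exact_mod_cast mul_pos (Nat.doubleFactorial_pos _) Fintype.card_pos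
  rw [sub_eq_iff_eq_add, probD, probD, ← add_div, eq_div_iff hpos.ne', one_mul]
  norm_cast
  convert (card_filter_add_card_filter_not (s := univ) E).symm

lemma probD_eq_sum_div (E : OrientedChordDiagram n → Prop) :
    probD n E = (∑ C, (#{b | E (C, b)} : ℝ))
      / ((2 * n - 1)‼ * Fintype.card (Fin (2 * n) → Fin (2 * n) → Bool)) := by
  rw [probD, card_univ, Fintype.card_prod, card_chordDiagram, Nat.cast_mul]
  congr 1
  simp only [card_filter, Fintype.sum_prod_type, Nat.cast_sum]

lemma probD_le_pow_of_forall_not_isRelay {P Q X U : Finset (Fin (2 * n))} {ρ : ℝ}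
    {E : OrientedChordDiagram n → Prop} (hPQ : Disjoint P Q) (hXU : Disjoint X U)
    (hρ0 : 1 / 2 ≤ ρ) (hρ1 : ρ ≤ 1) (h : (1 - ρ) * (2 * n) + #P ≤ (1 / 2) ^ #(X ∪ U) * #Q)
    (hinj : ∀ D, E D → Set.InjOn (chordRep D.1) (X ∪ U : Finset _))
    (hsep : ∀ D, E D → ∀ z ∈ X ∪ U, ∀ i ∈ P, ∀ j ∈ Q, Separates z (D.1.1 z) i j)
    (hrelay : ∀ D, E D → ∀ i ∈ P, D.1.1 i ∈ Q → ¬IsRelay D X U i) :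
    probD n E ≤ ρ ^ #P := by
  set θ : ℝ := 1 - (1 / 2) ^ #(X ∪ U) with hθ
  have hθ0 : 0 ≤ θ := sub_nonneg.2 (pow_le_one₀ (by norm_num) (by norm_num))
  have hθ1 : θ ≤ 1 := sub_le_self 1 (by positivity)
  set c : ℝ := (Fintype.card (Fin (2 * n) → Fin (2 * n) → Bool) : ℝ)
  have hcoin (C : ChordDiagram n) : (#{b | E (C, b)} : ℝ) ≤ θ ^ linkCount C.1 P Q * c := by
    by_cases hC : ∃ b, E (C, b)
    · obtain ⟨b, hb⟩ := hC
      rw [hθ, ← card_filter_forall_not_isRelay hPQ hXU (hinj _ hb) (hsep _ hb)]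
      exact Nat.cast_le.2 (card_le_card (monotone_filter_right univ fun b _ hb => hrelay _ hb))
    · rw [filter_false_of_mem fun b _ hb => hC ⟨b, hb⟩, card_empty, Nat.cast_zero]
      positivity
  rw [probD_eq_sum_div, div_le_iff₀ (by positivity)]
  refine (sum_le_sum fun C _ => hcoin C).trans ?_
  calc ∑ C : ChordDiagram n, θ ^ linkCount C.1 P Q * c
      = (∑ σ ∈ matchings univ, θ ^ linkCount σ P Q) * c := by
        rw [← sum_mul, sum_chordDiagram fun f => θ ^ linkCount f P Q]
    _ ≤ ρ ^ #P * (2 * n - 1)‼ * c := by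
        gcongr
        refine sum_matchings_pow_linkCount_le (by simp) (subset_univ P) (subset_univ Q) hPQ hθ0 hθ1
          hρ0 hρ1 ?_
        simpa [hθ] using h
    _ = ρ ^ #P * ((2 * n - 1)‼ * c) := mul_assoc _ _ _

end Probability

section Relays

variable {n : ℕ} {D : OrientedChordDiagram n}

lemma stronglyConnectedIn_of_hub {S T : Set (Fin (2 * n))} (hTS : T ⊆ S)
    (hout : ∀ c ∈ S, c ∈ T ∨ ∃ e ∈ T, OverD D c e) (hin : ∀ c ∈ S, c ∈ T ∨ ∃ e ∈ T, OverD D e c)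
    (hT : ∀ c ∈ T, ∃ e ∈ T, chordRep D.1 e ≠ chordRep D.1 c)
    (hrelay : ∀ x ∈ T, ∀ u ∈ T, chordRep D.1 x ≠ chordRep D.1 u →
      ∃ e ∈ S, OverD D x e ∧ OverD D e u) :
    StronglyConnectedIn D S := by
  let R : Fin (2 * n) → Fin (2 * n) → Prop := fun a b => a ∈ S ∧ b ∈ S ∧ OverD D a b
  have hne : ∀ x ∈ T, ∀ u ∈ T, chordRep D.1 x ≠ chordRep D.1 u → Relation.ReflTransGen R x u := by
    intro x hx u hu hxu
    obtain ⟨e, he, hxe, heu⟩ := hrelay x hx u hu hxu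
    exact .head ⟨hTS hx, he, hxe⟩ (.single ⟨he, hTS hu, heu⟩)
  have hhub : ∀ x ∈ T, ∀ u ∈ T, Relation.ReflTransGen R x u := by
    intro x hx u hu
    by_cases hxu : chordRep D.1 x = chordRep D.1 u
    · obtain ⟨e, he, hex⟩ := hT x hx
      exact (hne x hx e he hex.symm).trans (hne e he u hu (hxu ▸ hex))
    · exact hne x hx u hu hxu
  have hfrom : ∀ c ∈ S, ∃ e ∈ T, Relation.ReflTransGen R c e := fun c hc =>
    (hout c hc).elim (fun h => ⟨c, h, .refl⟩)
      fun ⟨e, he, hce⟩ => ⟨e, he, .single ⟨hc, hTS he, hce⟩⟩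
  have hto : ∀ c ∈ S, ∃ e ∈ T, Relation.ReflTransGen R e c := fun c hc =>
    (hin c hc).elim (fun h => ⟨c, h, .refl⟩)
      fun ⟨e, he, hec⟩ => ⟨e, he, .single ⟨hTS he, hc, hec⟩⟩
  intro c hc d hd
  obtain ⟨e, he, hce⟩ := hfrom c hc
  obtain ⟨f, hf, hfd⟩ := hto d hd
  exact (hce.trans (hhub e he f hf)).trans hfd

/-- If the chords starting in `X ∪ U` have clockwise span in `(m, L]`, then one of the chords from
the `m` points after `x` to points far from `x` relays from `X` to `U`. -/
def HasLocalRelay (m L : ℕ) (X U : Finset (Fin (2 * n))) (x : Fin (2 * n))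
    (D : OrientedChordDiagram n) : Prop :=
  (∀ z ∈ X ∪ U, m < cwDist z (D.1.1 z) ∧ cwDist z (D.1.1 z) ≤ L) →
    ∃ i ∈ arcAfter x m, D.1.1 i ∈ farFrom x (L + m) ∧ IsRelay D X U i

/-- If `x` and `u` lie on two different chords of length at least `L`, then some chord of length
at least `m` relays from `x` to `u`. -/
def HasLongRelay (m L : ℕ) (x u : Fin (2 * n)) (D : OrientedChordDiagram n) : Prop :=
  x ∈ lenAtLeast n L D.1 → u ∈ lenAtLeast n L D.1 → chordRep D.1 x ≠ chordRep D.1 u →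
    ∃ i ∈ lenAtLeast n m D.1, IsRelay D {x} {u} i

lemma probD_not_hasLocalRelay_le {m L : ℕ} {X U : Finset (Fin (2 * n))} {x : Fin (2 * n)}
    (hXU : Disjoint X U) (hx : X ∪ U ⊆ {x}) (hL : 20 * L ≤ n) (hm : 20 * (m + 1) ≤ n) :
    probD n (fun D => ¬HasLocalRelay m L X U x D) ≤ (3 / 5) ^ m := by
  have hcard : #(arcAfter x m) = m := card_arcAfter x (by omega)
  refine le_of_le_of_eq (probD_le_pow_of_forall_not_isRelay (Q := farFrom x (L + m))
    (disjoint_arcAfter_farFrom (Nat.le_add_left m L)) hXU (by norm_num) (by norm_num) ?_ ?_ ?_ ?_)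
    (congrArg ((3 / 5 : ℝ) ^ ·) hcard)
  · have hpow : (1 / 2 : ℝ) ≤ (1 / 2) ^ #(X ∪ U) := by
      have := card_le_card hx
      rw [card_singleton] at this
      simpa using pow_le_pow_of_le_one (a := (1 / 2 : ℝ)) (by norm_num) (by norm_num) this
    have hfar : (2 * n : ℝ) ≤ #(farFrom x (L + m)) + (2 * (L + m) + 1) := by
      exact_mod_cast tsub_le_iff_right.1 (le_card_farFrom x (L + m))
    have hL' : (20 * L : ℝ) ≤ n := mod_cast hL
    have hm' : (20 * (m + 1) : ℝ) ≤ n := mod_cast hm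
    rw [hcard]
    nlinarith
  · exact fun D _ => ((Set.subsingleton_singleton (a := x)).anti (mod_cast hx)).injOn _
  · intro D hD z hz i hi j hj
    obtain ⟨hmz, hzL⟩ := (not_forall.1 hD).1 z hz
    obtain rfl := mem_singleton.1 (hx hz)
    exact separates_of_mem_arcAfter hi hj hmz (by omega)
  · exact fun D hD i hi hiQ hrelay => (not_forall.1 hD).2 ⟨i, hi, hiQ, hrelay⟩

lemma probD_not_hasLongRelay_of_apply_eq_le {m : ℕ} (hm : 400 * (m + 1) ≤ n)
    (x u y v : Fin (2 * n)) :
    probD n (fun D => D.1.1 x = y ∧ D.1.1 u = v ∧ ¬HasLongRelay m (n / 20) x u D)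
      ≤ (799 / 800) ^ (n / 400) := by
  by_cases hlong : n / 20 < circDist x y ∧ n / 20 < circDist u v ∧ x ≠ u
  · obtain ⟨hxy, huv, hxu⟩ := hlong
    obtain ⟨P, Q, hPQ, hP, hQ, hPQsep⟩ := exists_far_separated (m := m) (p := n / 400)
      (q := n / 40) hxy huv (by omega) (by omega)
    rw [← hP]
    refine probD_le_pow_of_forall_not_isRelay (X := {x}) (U := {u}) hPQ
      (disjoint_singleton.2 hxu) (by norm_num) (by norm_num) ?_ ?_ ?_ ?_
    · have hcard : #({x} ∪ {u} : Finset (Fin (2 * n))) = 2 := card_pair hxu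
      have hcount : (n + 400 * (n / 400 : ℕ) : ℝ) ≤ 100 * #Q :=
        mod_cast (show n + 400 * (n / 400) ≤ 100 * #Q by omega)
      rw [hcard, hP]
      linarith
    · rintro D ⟨rfl, rfl, h⟩
      have hrep := (not_forall.1 (not_forall.1 (not_forall.1 h).2).2).1
      rw [coe_union, coe_singleton, coe_singleton, Set.singleton_union, Set.injOn_pair]
      exact fun h => absurd h hrep
    · rintro D ⟨rfl, rfl, -⟩ z hz i hi j hj
      obtain ⟨-, hsep, hsep'⟩ := hPQsep i hi j hj
      rcases mem_union.1 hz with hz | hz <;> obtain rfl := mem_singleton.1 hz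
      exacts [hsep, hsep']
    · rintro D ⟨rfl, rfl, h⟩ i hi hiQ hrelay
      exact h fun _ _ _ => ⟨i, mem_lenAtLeast.2 (hPQsep i hi _ hiQ).1, hrelay⟩
  · rw [probD_eq_zero]
    · positivity
    rintro D ⟨rfl, rfl, h⟩
    simp only [HasLongRelay, mem_lenAtLeast] at h
    push Not at h
    exact hlong ⟨h.1, h.2.1, fun hxu => h.2.2.1 (hxu ▸ rfl)⟩

lemma probD_exists_not_hasLongRelay_le {m : ℕ} (hm : 400 * (m + 1) ≤ n) :
    probD n (fun D => ∃ x u, ¬HasLongRelay m (n / 20) x u D)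
      ≤ (2 * n) ^ 4 * (799 / 800) ^ (n / 400) := by
  let E (w : Fin (2 * n) × Fin (2 * n) × Fin (2 * n) × Fin (2 * n)) (D : OrientedChordDiagram n) :=
    D.1.1 w.1 = w.2.2.1 ∧ D.1.1 w.2.1 = w.2.2.2 ∧ ¬HasLongRelay m (n / 20) w.1 w.2.1 D
  calc probD n (fun D => ∃ x u, ¬HasLongRelay m (n / 20) x u D)
      ≤ probD n (fun D => ∃ w, E w D) :=
        probD_mono fun D ⟨x, u, h⟩ => ⟨(x, u, D.1.1 x, D.1.1 u), rfl, rfl, h⟩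
    _ ≤ Fintype.card (Fin (2 * n) × Fin (2 * n) × Fin (2 * n) × Fin (2 * n))
          * (799 / 800) ^ (n / 400) :=
        probD_exists_le_card_mul fun w => probD_not_hasLongRelay_of_apply_eq_le hm _ _ _ _
    _ = (2 * n) ^ 4 * (799 / 800) ^ (n / 400) := by
        simp only [Fintype.card_prod, Fintype.card_fin]
        push_cast
        ring

/-- Every point has local relays with no source and target, with itself as source, and with itself
as target. -/
def HasAllLocalRelays (m L : ℕ) (D : OrientedChordDiagram n) : Prop :=
  ∀ x, HasLocalRelay m L ∅ ∅ x D ∧ HasLocalRelay m L {x} ∅ x D ∧ HasLocalRelay m L ∅ {x} x D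

lemma probD_not_hasAllLocalRelays_le {m L : ℕ} (hL : 20 * L ≤ n) (hm : 20 * (m + 1) ≤ n) :
    probD n (fun D => ¬HasAllLocalRelays m L D) ≤ 6 * n * (3 / 5) ^ m := by
  have hone (x : Fin (2 * n)) : probD n (fun D => ¬HasLocalRelay m L ∅ ∅ x D ∨
      ¬HasLocalRelay m L {x} ∅ x D ∨ ¬HasLocalRelay m L ∅ {x} x D) ≤ 3 * (3 / 5) ^ m := by
    have h0 := probD_not_hasLocalRelay_le (X := ∅) (U := ∅) (x := x) (by simp) (by simp) hL hm
    have h1 := probD_not_hasLocalRelay_le (X := {x}) (U := ∅) (x := x) (by simp) (by simp) hL hm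
    have h2 := probD_not_hasLocalRelay_le (X := ∅) (U := {x}) (x := x) (by simp) (by simp) hL hm
    refine (probD_or_le _ _).trans ?_
    linarith [probD_or_le (fun D => ¬HasLocalRelay m L {x} ∅ x D)
      (fun D => ¬HasLocalRelay m L ∅ {x} x D)]
  calc probD n (fun D => ¬HasAllLocalRelays m L D)
      ≤ probD n (fun D => ∃ x, ¬HasLocalRelay m L ∅ ∅ x D ∨
          ¬HasLocalRelay m L {x} ∅ x D ∨ ¬HasLocalRelay m L ∅ {x} x D) :=
        probD_mono fun D h => by simpa only [HasAllLocalRelays, not_forall, not_and_or] using h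
    _ ≤ Fintype.card (Fin (2 * n)) * (3 * (3 / 5) ^ m) := probD_exists_le_card_mul hone
    _ = 6 * n * (3 / 5) ^ m := by
        rw [Fintype.card_fin]
        push_cast
        ring

lemma HasLocalRelay.exists_mem_lenAtLeast {m L : ℕ} {X U : Finset (Fin (2 * n))}
    {x : Fin (2 * n)} (h : HasLocalRelay m L X U x D)
    (hspan : ∀ z ∈ X ∪ U, m < cwDist z (D.1.1 z) ∧ cwDist z (D.1.1 z) ≤ L) :
    ∃ i ∈ arcAfter x m, i ∈ lenAtLeast n L D.1 ∧ IsRelay D X U i := by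
  obtain ⟨i, hi, hiQ, hrelay⟩ := h hspan
  exact ⟨i, hi, mem_lenAtLeast.2 (lt_circDist_of_mem_arcAfter hi hiQ), hrelay⟩

lemma exists_endpoint_cwDist {m L : ℕ} {C : ChordDiagram n} {c : Fin (2 * n)}
    (hm : c ∈ lenAtLeast n m C) (hL : c ∉ lenAtLeast n L C) :
    ∃ z, (z = c ∨ z = C.1 c) ∧ m < cwDist z (C.1 z) ∧ cwDist z (C.1 z) ≤ L := by
  rw [mem_lenAtLeast, circDist] at hm hL
  rcases le_total (cwDist c (C.1 c)) (cwDist (C.1 c) c) with h | h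
  · exact ⟨c, .inl rfl, by omega, by omega⟩
  · refine ⟨C.1 c, .inr rfl, ?_⟩
    rw [C.2.1]
    omega

lemma stronglyConnectedIn_lenAtLeast {m L : ℕ} (hmL : m ≤ L) (hlocal : HasAllLocalRelays m L D)
    (hlong : ∀ x u, HasLongRelay m L x u D) :
    StronglyConnectedIn D (lenAtLeast n m D.1 : Set (Fin (2 * n))) := by
  refine stronglyConnectedIn_of_hub (T := lenAtLeast n L D.1) ?_ ?_ ?_ ?_ ?_
  · exact fun c hc => (mem_lenAtLeast.2 (hmL.trans_lt (mem_lenAtLeast.1 hc)))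
  · intro c hc
    refine or_iff_not_imp_left.2 fun hcL => ?_
    obtain ⟨z, hzc, hz⟩ := exists_endpoint_cwDist hc hcL
    obtain ⟨e, -, heL, hze, -⟩ := (hlocal z).2.1.exists_mem_lenAtLeast (by simpa using hz)
    refine ⟨e, heL, ?_⟩
    obtain rfl | rfl := hzc
    exacts [hze z (mem_singleton_self z), overD_apply_left.1 (hze _ (mem_singleton_self _))]
  · intro c hc
    refine or_iff_not_imp_left.2 fun hcL => ?_
    obtain ⟨z, hzc, hz⟩ := exists_endpoint_cwDist hc hcL
    obtain ⟨e, -, heL, -, hez⟩ := (hlocal z).2.2.exists_mem_lenAtLeast (by simpa using hz)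
    refine ⟨e, heL, ?_⟩
    obtain rfl | rfl := hzc
    exacts [hez z (mem_singleton_self z), overD_apply_right.1 (hez _ (mem_singleton_self _))]
  · intro c hc
    obtain ⟨e, hec, heL, -⟩ := (hlocal c).1.exists_mem_lenAtLeast (by simp)
    refine ⟨e, heL, fun hrep => ?_⟩
    obtain ⟨hpos, hem⟩ := mem_arcAfter.1 hec
    obtain rfl | rfl := chordRep_eq_iff.1 hrep
    · have := cwDist_cases e e
      omega
    · have hcL := (lt_min_iff.1 (mem_lenAtLeast.1 hc)).1
      omega
  · intro x hx u hu hxu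
    obtain ⟨e, he, hxe, heu⟩ := hlong x u hx hu hxu
    exact ⟨e, he, hxe x (mem_singleton_self x), heu u (mem_singleton_self u)⟩

theorem one_sub_le_probD_stronglyConnectedIn {m : ℕ} (hm : 400 * (m + 1) ≤ n) :
    1 - (6 * n * (3 / 5) ^ m + (2 * n) ^ 4 * (799 / 800) ^ (n / 400))
      ≤ probD n (fun D => StronglyConnectedIn D (lenAtLeast n m D.1 : Set (Fin (2 * n)))) := by
  rw [← one_sub_probD_not]
  refine sub_le_sub_left ?_ 1
  calc probD n (fun D => ¬StronglyConnectedIn D (lenAtLeast n m D.1 : Set (Fin (2 * n))))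
      ≤ probD n (fun D => ¬HasAllLocalRelays m (n / 20) D ∨
          ∃ x u, ¬HasLongRelay m (n / 20) x u D) := by
        refine probD_mono fun D hD => ?_
        contrapose! hD
        exact stronglyConnectedIn_lenAtLeast (by omega) hD.1 hD.2
    _ ≤ _ := probD_or_le _ _
    _ ≤ 6 * n * (3 / 5) ^ m + (2 * n) ^ 4 * (799 / 800) ^ (n / 400) :=
        add_le_add (probD_not_hasAllLocalRelays_le (by omega) (by omega))
          (probD_exists_not_hasLongRelay_le hm)

end Relays

section Asymptotics

open Topology

lemma tendsto_pow_mul_const_pow_div (k : ℕ) {d : ℕ} (hd : 0 < d) {r : ℝ} (hr0 : 0 ≤ r)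
    (hr1 : r < 1) : Tendsto (fun n : ℕ => (n : ℝ) ^ k * r ^ (n / d)) atTop (𝓝 0) := by
  have hlim : Tendsto (fun n : ℕ => (2 * d : ℝ) ^ k * ((n / d : ℕ) ^ k * r ^ (n / d)))
      atTop (𝓝 0) := by
    rw [← mul_zero ((2 * d : ℝ) ^ k)]
    exact ((tendsto_pow_const_mul_const_pow_of_lt_one k hr0 hr1).comp
      (Nat.tendsto_div_const_atTop hd.ne')).const_mul _
  refine squeeze_zero' (Eventually.of_forall fun n => by positivity) ?_ hlim
  filter_upwards [eventually_ge_atTop d] with n hn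
  have hle : (n : ℝ) ≤ 2 * d * (n / d : ℕ) := by
    have hmod := Nat.div_add_mod n d
    have hlt := Nat.mod_lt n hd
    have hdiv : d ≤ d * (n / d) := Nat.le_mul_of_pos_right d (Nat.div_pos hn hd)
    exact_mod_cast show n ≤ 2 * d * (n / d) by linarith
  calc (n : ℝ) ^ k * r ^ (n / d) ≤ (2 * d * (n / d : ℕ)) ^ k * r ^ (n / d) := by gcongr
    _ = (2 * d : ℝ) ^ k * ((n / d : ℕ) ^ k * r ^ (n / d)) := by rw [mul_pow, mul_assoc]

lemma tendsto_mul_pow_ceil_mul_log {c r : ℝ} (hr0 : 0 < r) (hr1 : r ≤ 1)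
    (hcr : c * Real.log r < -1) :
    Tendsto (fun n : ℕ => (n : ℝ) * r ^ ⌈c * Real.log n⌉₊) atTop (𝓝 0) := by
  have hlim : Tendsto (fun n : ℕ => (n : ℝ) ^ (-(-(1 + c * Real.log r)))) atTop (𝓝 0) :=
    (tendsto_rpow_neg_atTop (by linarith)).comp tendsto_natCast_atTop_atTop
  refine squeeze_zero' (Eventually.of_forall fun n => by positivity) ?_ hlim
  filter_upwards [eventually_gt_atTop 0] with n hn
  have hn' : (0 : ℝ) < n := mod_cast hn
  calc (n : ℝ) * r ^ ⌈c * Real.log n⌉₊ = n * r ^ (⌈c * Real.log n⌉₊ : ℝ) := by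
        rw [Real.rpow_natCast]
    _ ≤ n * r ^ (c * Real.log n) := by
        gcongr n * ?_
        exact Real.rpow_le_rpow_of_exponent_ge hr0 hr1 (Nat.le_ceil _)
    _ = n ^ (1 : ℝ) * n ^ (c * Real.log r) := by
        rw [Real.rpow_one, Real.rpow_def_of_pos hr0, Real.rpow_def_of_pos hn']
        ring_nf
    _ = n ^ (-(-(1 + c * Real.log r))) := by rw [← Real.rpow_add hn', neg_neg]

lemma eventually_mul_ceil_mul_log_add_one_le (K : ℕ) {c : ℝ} (hc : 0 ≤ c) :
    ∀ᶠ n : ℕ in atTop, K * (⌈c * Real.log n⌉₊ + 1) ≤ n := by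
  have hlittle : (fun x : ℝ => K * (c * Real.log x + 2)) =o[atTop] id :=
    ((Real.isLittleO_log_id_atTop.const_mul_left c).add
      (Asymptotics.isLittleO_const_id_atTop 2)).const_mul_left K
  filter_upwards [tendsto_natCast_atTop_atTop.eventually (hlittle.bound one_pos)] with n hn
  have hceil := Nat.ceil_lt_add_one (mul_nonneg hc (Real.log_natCast_nonneg n))
  rw [one_mul, id, Real.norm_natCast] at hn
  have hle : (K * (⌈c * Real.log n⌉₊ + 1) : ℝ) ≤ n :=
    calc (K * (⌈c * Real.log n⌉₊ + 1) : ℝ) ≤ K * (c * Real.log n + 2) :=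
          mul_le_mul_of_nonneg_left (by linarith) K.cast_nonneg
      _ ≤ n := (le_abs_self _).trans hn
  exact_mod_cast hle

lemma two_mul_log_three_fifths_lt : 2 * Real.log (3 / 5) < -1 := by
  have hsq : Real.exp 1 < (5 / 3) ^ 2 := Real.exp_one_lt_d9.trans (by norm_num)
  have hlog := (Real.lt_log_iff_exp_lt (by norm_num)).2 hsq
  rw [Real.log_pow, ← inv_div, Real.log_inv] at hlog
  push_cast at hlog
  linarith

end Asymptotics

theorem stmt13 :
    Filter.Tendsto
      (fun n : ℕ => probD n (fun D =>
        StronglyConnectedIn D {x | 2 * Real.log n ≤ (chordLength D.1 x : ℝ)}))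
      Filter.atTop (nhds 1) := by
  have hset (n : ℕ) (C : ChordDiagram n) : {x | 2 * Real.log n ≤ (chordLength C x : ℝ)}
      = lenAtLeast n ⌈2 * Real.log n⌉₊ C := by
    ext x
    simp [lenAtLeast, Nat.ceil_le]
  have hshort := (tendsto_mul_pow_ceil_mul_log (by norm_num) (by norm_num)
    two_mul_log_three_fifths_lt).const_mul 6
  have hlong := (tendsto_pow_mul_const_pow_div 4 (d := 400) (r := 799 / 800) (by norm_num)
    (by norm_num) (by norm_num)).const_mul (2 ^ 4)
  have hlower := (hshort.add hlong).const_sub 1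
  simp only [mul_zero, add_zero, sub_zero] at hlower
  simp only [hset]
  refine tendsto_of_tendsto_of_tendsto_of_le_of_le' hlower tendsto_const_nhds ?_
    (Eventually.of_forall fun n => probD_le_one _)
  filter_upwards [eventually_mul_ceil_mul_log_add_one_le 400 zero_le_two] with n hn
  simpa only [mul_pow, mul_assoc] using one_sub_le_probD_stronglyConnectedIn hn
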